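/- arXiv:1203.3074 — 3 statements merged into one kernel-verified Lean document; each statement's English description precedes it below -/
import Mathlib

section
/- Let f and g be integrable functions on [a,b] satisfying φ ≤ f(x) ≤ Φ and γ ≤ g(x) ≤ Γ for all x ∈ [a,b]. Then |(1/(b−a)) ∫_a^b f(x)g(x) dx − ((1/(b−a)) ∫_a^b f(x) dx)((1/(b−a)) ∫_a^b g(x) dx)| ≤ (1/4)(Φ − φ)(Γ − γ). -/
open MeasureTheory Set intervalIntegral

/-!
The quantity to be bounded is the covariance of `f` and `g` under the normalized measure.
By Cauchy–Schwarz its absolute value is at most the geometric mean of their variances, and by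
Popoviciu's inequality a function with values in `[φ, Φ]` has variance at most `((Φ - φ) / 2) ^ 2`.
-/

open ProbabilityTheory

section Covariance

variable {Ω : Type*} [MeasurableSpace Ω] {μ : Measure Ω} {X Y : Ω → ℝ}

theorem variance_const_mul_add [IsFiniteMeasure μ] (hX : MemLp X 2 μ) (hY : MemLp Y 2 μ) (s : ℝ) :
    Var[fun ω ↦ s * X ω + Y ω; μ] = s ^ 2 * Var[X; μ] + 2 * s * cov[X, Y; μ] + Var[Y; μ] := by
  rw [variance_fun_add (hX.const_mul s) hY, variance_const_mul, covariance_const_mul_left,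
    mul_assoc 2 s]

theorem sq_covariance_le_variance_mul_variance [IsFiniteMeasure μ]
    (hX : MemLp X 2 μ) (hY : MemLp Y 2 μ) :
    cov[X, Y; μ] ^ 2 ≤ Var[X; μ] * Var[Y; μ] := by
  have quadratic_nonneg (s : ℝ) :
      0 ≤ Var[X; μ] * (s * s) + 2 * cov[X, Y; μ] * s + Var[Y; μ] := by
    linarith [variance_nonneg (fun ω ↦ s * X ω + Y ω) μ, variance_const_mul_add hX hY s]
  have discrim_nonpos := discrim_le_zero quadratic_nonneg
  rw [discrim] at discrim_nonpos
  linarith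

theorem abs_covariance_le_of_mem_Icc [IsProbabilityMeasure μ] {a b c d : ℝ}
    (hX : AEMeasurable X μ) (hY : AEMeasurable Y μ)
    (hXab : ∀ᵐ ω ∂μ, X ω ∈ Icc a b) (hYcd : ∀ᵐ ω ∂μ, Y ω ∈ Icc c d) :
    |cov[X, Y; μ]| ≤ (b - a) / 2 * ((d - c) / 2) := by
  obtain ⟨ω, hXω, hYω⟩ := (hXab.and hYcd).exists
  have hab : 0 ≤ b - a := sub_nonneg.2 (hXω.1.trans hXω.2)
  have hcd : 0 ≤ d - c := sub_nonneg.2 (hYω.1.trans hYω.2)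
  refine abs_le_of_sq_le_sq ?_ (by positivity)
  calc cov[X, Y; μ] ^ 2
      ≤ Var[X; μ] * Var[Y; μ] :=
        sq_covariance_le_variance_mul_variance (memLp_of_bounded hXab hX.aestronglyMeasurable 2)
          (memLp_of_bounded hYcd hY.aestronglyMeasurable 2)
    _ ≤ ((b - a) / 2) ^ 2 * ((d - c) / 2) ^ 2 :=
        mul_le_mul (variance_le_sq_of_bounded hXab hX) (variance_le_sq_of_bounded hYcd hY)
          (variance_nonneg Y μ) (sq_nonneg _)
    _ = ((b - a) / 2 * ((d - c) / 2)) ^ 2 := (mul_pow _ _ 2).symm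

end Covariance

theorem gruss_inequality_general {α : Type*} [MeasurableSpace α] {μ : Measure α}
    [IsFiniteMeasure μ] [NeZero μ] {φ Φ γ Γ : ℝ} {f g : α → ℝ}
    (hfm : AEMeasurable f μ) (hgm : AEMeasurable g μ)
    (hf : ∀ᵐ x ∂μ, f x ∈ Icc φ Φ) (hg : ∀ᵐ x ∂μ, g x ∈ Icc γ Γ) :
    |(⨍ x, f x * g x ∂μ) - (⨍ x, f x ∂μ) * ⨍ x, g x ∂μ| ≤ 1 / 4 * (Φ - φ) * (Γ - γ) := by
  let ν := (μ univ)⁻¹ • μ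
  have hfν : AEMeasurable f ν := hfm.smul_measure _
  have hgν : AEMeasurable g ν := hgm.smul_measure _
  have hfIcc : ∀ᵐ x ∂ν, f x ∈ Icc φ Φ := Measure.ae_smul_measure hf _
  have hgIcc : ∀ᵐ x ∂ν, g x ∈ Icc γ Γ := Measure.ae_smul_measure hg _
  have cov_eq : cov[f, g; ν] = (⨍ x, f x * g x ∂μ) - (⨍ x, f x ∂μ) * ⨍ x, g x ∂μ :=
    covariance_eq_sub (memLp_of_bounded hfIcc hfν.aestronglyMeasurable 2)
      (memLp_of_bounded hgIcc hgν.aestronglyMeasurable 2)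
  rw [← cov_eq]
  exact (abs_covariance_le_of_mem_Icc hfν hgν hfIcc hgIcc).trans_eq (by ring)

theorem one_div_mul_integral_eq_setAverage_Ioc {a b : ℝ} (hab : a ≤ b) (f : ℝ → ℝ) :
    1 / (b - a) * ∫ x in a..b, f x = ⨍ x in Ioc a b, f x := by
  rw [← uIoc_of_le hab, interval_average_eq, one_div, smul_eq_mul]

/-- **Grüss inequality.** If `f, g` are integrable on `[a,b]` with
`φ ≤ f ≤ Φ` and `γ ≤ g ≤ Γ` on `[a,b]`, then
`|M(fg) − M(f)M(g)| ≤ (1/4)(Φ−φ)(Γ−γ)`. -/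
theorem gruss_inequality (a b φ Φ γ Γ : ℝ) (hab : a < b) (f g : ℝ → ℝ)
    (hfint : IntervalIntegrable f volume a b)
    (hgint : IntervalIntegrable g volume a b)
    (hf : ∀ x ∈ Icc a b, φ ≤ f x ∧ f x ≤ Φ)
    (hg : ∀ x ∈ Icc a b, γ ≤ g x ∧ g x ≤ Γ) :
    |(1 / (b - a)) * (∫ x in a..b, f x * g x) -
        ((1 / (b - a)) * ∫ x in a..b, f x) * ((1 / (b - a)) * ∫ x in a..b, g x)| ≤
      (1 / 4) * (Φ - φ) * (Γ - γ) := by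
  have : NeZero (volume.restrict (Ioc a b)) := ⟨by simpa using hab⟩
  simp only [one_div_mul_integral_eq_setAverage_Ioc hab.le]
  exact gruss_inequality_general hfint.1.aemeasurable hgint.1.aemeasurable
    (ae_restrict_of_forall_mem measurableSet_Ioc fun x hx ↦ hf x (Ioc_subset_Icc_self hx))
    (ae_restrict_of_forall_mem measurableSet_Ioc fun x hx ↦ hg x (Ioc_subset_Icc_self hx))
end

section
/- Let I ⊂ ℝ be an open interval, a, b ∈ I with a < b, and let f : I → ℝ be a differentiable function such that there exist constants φ, Φ ∈ ℝ with φ ≤ f′(x) ≤ Φ for all x ∈ [a,b]. Then for all x ∈ [a,b], |f(x) − ((f(b) − f(a))/(b−a))(x − (a+b)/2) − (1/(b−a)) ∫_a^b f(t) dt| ≤ (1/(4√3))(b−a)(Φ − φ). -/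
open MeasureTheory Set intervalIntegral

/-!
Both sides are unchanged when an affine function is subtracted from `f`, so subtracting
`(φ + Φ) / 2 * t` reduces to a function that is Lipschitz with constant `K = (Φ - φ) / 2`.
For `x` in the right half of `[a, b]`, put `p = x - (b - a) / 2`; the remainder is then the error of
the rectangle rule with node `a` on `[a, p]`, plus that with node `x` on `[p, b]`, minus
`(p - a) (f b - f x)`. Ostrowski's inequality bounds the first two terms, and the total is
`K (b - a)² / 4`. This yields the constant `1 / 8`, which is smaller than `1 / (4√3)`.
-/

open scoped NNReal

section Ostrowski

variable {E : Type*} [NormedAddCommGroup E] [NormedSpace ℝ E] {g : ℝ → E} {K : ℝ≥0} {a b c : ℝ}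

lemma integral_abs_sub_of_mem_Icc (hc : c ∈ Icc a b) :
    ∫ t in a..b, |t - c| = ((c - a) ^ 2 + (b - c) ^ 2) / 2 := by
  have hcont : Continuous fun t : ℝ ↦ |t - c| := by fun_prop
  have hleft : ∫ t in a..c, |t - c| = ∫ t in a..c, (c - t) :=
    integral_congr fun t ht ↦ by
      rw [uIcc_of_le hc.1] at ht
      rw [abs_sub_comm, abs_of_nonneg (sub_nonneg.2 ht.2)]
  have hright : ∫ t in c..b, |t - c| = ∫ t in c..b, (t - c) :=
    integral_congr fun t ht ↦ by
      rw [uIcc_of_le hc.2] at ht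
      exact abs_of_nonneg (sub_nonneg.2 ht.1)
  rw [← integral_add_adjacent_intervals (hcont.intervalIntegrable a c)
    (hcont.intervalIntegrable c b), hleft, hright,
    integral_comp_sub_left (fun t ↦ t), integral_comp_sub_right (fun t ↦ t)]
  simp only [integral_id]
  ring

variable [CompleteSpace E]

/-- **Ostrowski's inequality** for Lipschitz functions. -/
lemma norm_smul_sub_integral_le_of_lipschitzOnWith (hg : LipschitzOnWith K g (Icc a b))
    (hc : c ∈ Icc a b) :
    ‖(b - a) • g c - ∫ t in a..b, g t‖ ≤ K * (((c - a) ^ 2 + (b - c) ^ 2) / 2) := by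
  have hab : a ≤ b := hc.1.trans hc.2
  have hint : IntervalIntegrable g volume a b := hg.continuousOn.intervalIntegrable_of_Icc hab
  calc ‖(b - a) • g c - ∫ t in a..b, g t‖
      = ‖∫ t in a..b, (g c - g t)‖ := by
        rw [integral_sub intervalIntegrable_const hint, intervalIntegral.integral_const]
    _ ≤ ∫ t in a..b, K * |t - c| := by
        refine norm_integral_le_of_norm_le hab (.of_forall fun t ht ↦ ?_)
          (Continuous.intervalIntegrable (by fun_prop) a b)
        rw [norm_sub_rev]
        exact hg.norm_sub_le (Ioc_subset_Icc_self ht) hc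
    _ = K * (((c - a) ^ 2 + (b - c) ^ 2) / 2) := by
        rw [intervalIntegral.integral_const_mul, integral_abs_sub_of_mem_Icc hc]

end Ostrowski

section Remainder

variable {E : Type*} [NormedAddCommGroup E] [NormedSpace ℝ E] {f f' g : ℝ → E} {K : ℝ≥0}
  {a b x : ℝ} {c : E}

lemma lipschitzOnWith_Icc_of_norm_hasDerivAt_le (hf : ContinuousOn f (Icc a b))
    (hderiv : ∀ t ∈ Ioo a b, HasDerivAt f (f' t) t) (hbound : ∀ t ∈ Ioo a b, ‖f' t‖ ≤ K) :
    LipschitzOnWith K f (Icc a b) := by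
  rcases eq_or_ne a b with rfl | hab
  · intro s hs t ht
    simp [subsingleton_Icc_of_ge le_rfl hs ht]
  · rw [← closure_Ioo hab] at hf ⊢
    exact .closure hf <| (convex_Ioo a b).lipschitzOnWith_of_nnnorm_hasDerivWithin_le
      (fun t ht ↦ (hderiv t ht).hasDerivWithinAt) hbound

/-- The error of the perturbed rectangle rule `(b - a) g(x) - (x - (a + b) / 2) (g(b) - g(a))` for
`∫ t in a..b, g t`: the quantity estimated by inequalities of Ostrowski–Grüss type, multiplied by
`b - a` in order to avoid division. -/
noncomputable def ostrowskiGrussRemainder (g : ℝ → E) (a b x : ℝ) : E :=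
  (b - a) • g x - (x - (a + b) / 2) • (g b - g a) - ∫ t in a..b, g t

lemma ostrowskiGrussRemainder_comp_sub_left (g : ℝ → E) (a b x : ℝ) :
    ostrowskiGrussRemainder (fun t ↦ g (a + b - t)) a b (a + b - x) =
      ostrowskiGrussRemainder g a b x := by
  simp only [ostrowskiGrussRemainder, integral_comp_sub_left g, sub_sub_cancel,
    add_sub_cancel_left, add_sub_cancel_right]
  module

lemma ostrowskiGrussRemainder_eq_add_sub {p : ℝ} (hleft : IntervalIntegrable g volume a p)
    (hright : IntervalIntegrable g volume p b) (hp : x - p = (b - a) / 2) :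
    ostrowskiGrussRemainder g a b x =
      ((p - a) • g a - ∫ t in a..p, g t) + ((b - p) • g x - ∫ t in p..b, g t) -
        (p - a) • (g b - g x) := by
  have hcoeff : x - (a + b) / 2 = p - a := by linarith
  rw [ostrowskiGrussRemainder, ← integral_add_adjacent_intervals hleft hright, hcoeff]
  module

variable [CompleteSpace E]

lemma ostrowskiGrussRemainder_sub_smul_const (hg : IntervalIntegrable g volume a b) (c : E)
    (x : ℝ) :
    ostrowskiGrussRemainder (fun t ↦ g t - t • c) a b x = ostrowskiGrussRemainder g a b x := by
  have hlin : IntervalIntegrable (fun t : ℝ ↦ t • c) volume a b :=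
    Continuous.intervalIntegrable (by fun_prop) a b
  simp only [ostrowskiGrussRemainder, integral_sub hg hlin,
    intervalIntegral.integral_smul_const, integral_id]
  module

lemma norm_ostrowskiGrussRemainder_le_of_midpoint_le (hg : LipschitzOnWith K g (Icc a b))
    (hmx : (a + b) / 2 ≤ x) (hxb : x ≤ b) :
    ‖ostrowskiGrussRemainder g a b x‖ ≤ K * (b - a) ^ 2 / 4 := by
  obtain ⟨p, hp⟩ : ∃ p, x - p = (b - a) / 2 := ⟨x - (b - a) / 2, sub_sub_cancel _ _⟩
  have hap : a ≤ p := by linarith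
  have hpx : p ≤ x := by linarith
  have hpb : p ≤ b := hpx.trans hxb
  have hleft : LipschitzOnWith K g (Icc a p) := hg.mono (Icc_subset_Icc_right hpb)
  have hright : LipschitzOnWith K g (Icc p b) := hg.mono (Icc_subset_Icc_left hap)
  have hslope : ‖(p - a) • (g b - g x)‖ ≤ (p - a) * (K * (b - x)) := by
    have hdist := hright.norm_sub_le (right_mem_Icc.2 hpb) ⟨hpx, hxb⟩
    rw [Real.norm_of_nonneg (sub_nonneg.2 hxb)] at hdist
    rw [norm_smul, Real.norm_of_nonneg (sub_nonneg.2 hap)]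
    exact mul_le_mul_of_nonneg_left hdist (sub_nonneg.2 hap)
  calc ‖ostrowskiGrussRemainder g a b x‖
      ≤ ‖(p - a) • g a - ∫ t in a..p, g t‖ + ‖(b - p) • g x - ∫ t in p..b, g t‖ +
          ‖(p - a) • (g b - g x)‖ := by
        rw [ostrowskiGrussRemainder_eq_add_sub
          (hleft.continuousOn.intervalIntegrable_of_Icc hap)
          (hright.continuousOn.intervalIntegrable_of_Icc hpb) hp]
        exact norm_sub_le_of_le (norm_add_le _ _) le_rfl
    _ ≤ K * (((a - a) ^ 2 + (p - a) ^ 2) / 2) + K * (((x - p) ^ 2 + (b - x) ^ 2) / 2) +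
          (p - a) * (K * (b - x)) :=
        add_le_add_three
          (norm_smul_sub_integral_le_of_lipschitzOnWith hleft (left_mem_Icc.2 hap))
          (norm_smul_sub_integral_le_of_lipschitzOnWith hright ⟨hpx, hxb⟩) hslope
    _ = K * (b - a) ^ 2 / 4 := by
        rw [eq_add_of_sub_eq hp]
        ring

lemma norm_ostrowskiGrussRemainder_le_of_lipschitzOnWith (hg : LipschitzOnWith K g (Icc a b))
    (hx : x ∈ Icc a b) :
    ‖ostrowskiGrussRemainder g a b x‖ ≤ K * (b - a) ^ 2 / 4 := by
  rcases le_total ((a + b) / 2) x with hmx | hxm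
  · exact norm_ostrowskiGrussRemainder_le_of_midpoint_le hg hmx hx.2
  · have hmaps : MapsTo (fun t ↦ a + b - t) (Icc a b) (Icc a b) := fun t ht ↦
      ⟨by linarith [ht.2], by linarith [ht.1]⟩
    have hreflect : LipschitzOnWith K (fun t ↦ g (a + b - t)) (Icc a b) := by
      simpa only [mul_one] using!
        hg.comp (IsometryEquiv.subLeft (a + b)).isometry.lipschitz.lipschitzOnWith hmaps
    rw [← ostrowskiGrussRemainder_comp_sub_left]
    exact norm_ostrowskiGrussRemainder_le_of_midpoint_le hreflect (by linarith) (by linarith [hx.1])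

lemma norm_ostrowskiGrussRemainder_le_of_norm_hasDerivAt_sub_le (hf : ContinuousOn f (Icc a b))
    (hderiv : ∀ t ∈ Ioo a b, HasDerivAt f (f' t) t) (hbound : ∀ t ∈ Ioo a b, ‖f' t - c‖ ≤ K)
    (hx : x ∈ Icc a b) :
    ‖ostrowskiGrussRemainder f a b x‖ ≤ K * (b - a) ^ 2 / 4 := by
  have hlip : LipschitzOnWith K (fun t ↦ f t - t • c) (Icc a b) :=
    lipschitzOnWith_Icc_of_norm_hasDerivAt_le (hf.sub (by fun_prop))
      (fun t ht ↦ by simpa using! (hderiv t ht).sub ((hasDerivAt_id t).smul_const c)) hbound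
  rw [← ostrowskiGrussRemainder_sub_smul_const
    (hf.intervalIntegrable_of_Icc (hx.1.trans hx.2)) c]
  exact norm_ostrowskiGrussRemainder_le_of_lipschitzOnWith hlip hx

end Remainder

theorem matic_pecaric_ujevic_general {a b x φ Φ : ℝ} {f f' : ℝ → ℝ} (hab : a < b)
    (hf : ContinuousOn f (Icc a b)) (hderiv : ∀ t ∈ Ioo a b, HasDerivAt f (f' t) t)
    (hbound : ∀ t ∈ Ioo a b, f' t ∈ Icc φ Φ) (hx : x ∈ Icc a b) :
    |f x - ((f b - f a) / (b - a)) * (x - (a + b) / 2) - (1 / (b - a)) * ∫ t in a..b, f t| ≤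
      1 / 8 * (b - a) * (Φ - φ) := by
  have hba : 0 < b - a := sub_pos.2 hab
  obtain ⟨t₀, ht₀⟩ := nonempty_Ioo.2 hab
  have hK : 0 ≤ (Φ - φ) / 2 := by linarith [(hbound t₀ ht₀).1, (hbound t₀ ht₀).2]
  have hcenter : ∀ t ∈ Ioo a b, ‖f' t - (φ + Φ) / 2‖ ≤ (Φ - φ) / 2 := fun t ht ↦ by
    simpa only [Real.Icc_eq_closedBall, mem_closedBall_iff_norm] using hbound t ht
  have hremainder : |ostrowskiGrussRemainder f a b x| ≤ (Φ - φ) / 2 * (b - a) ^ 2 / 4 :=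
    norm_ostrowskiGrussRemainder_le_of_norm_hasDerivAt_sub_le (K := ⟨(Φ - φ) / 2, hK⟩)
      hf hderiv hcenter hx
  calc |f x - ((f b - f a) / (b - a)) * (x - (a + b) / 2) - (1 / (b - a)) * ∫ t in a..b, f t|
      = |ostrowskiGrussRemainder f a b x / (b - a)| := by
        simp only [ostrowskiGrussRemainder, smul_eq_mul]
        congr 1
        field_simp
    _ = |ostrowskiGrussRemainder f a b x| / (b - a) := by rw [abs_div, abs_of_pos hba]
    _ ≤ (Φ - φ) / 2 * (b - a) ^ 2 / 4 / (b - a) := by gcongr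
    _ = 1 / 8 * (b - a) * (Φ - φ) := by field_simp; ring

lemma one_eighth_le_one_div_four_mul_sqrt_three : (1 : ℝ) / 8 ≤ 1 / (4 * √3) := by
  have hsqrt : √3 ≤ 2 := Real.sqrt_le_iff.2 ⟨by norm_num, by norm_num⟩
  exact one_div_le_one_div_of_le (by positivity) (by linarith)

/-- **Matić–Pečarić–Ujević inequality.** Let `I` be an open interval,
`a, b ∈ I` with `a < b`, and `f : ℝ → ℝ` differentiable on `I` with derivative `f'`
satisfying `φ ≤ f' ≤ Φ` on `[a,b]`.  Then for all `x ∈ [a,b]`,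
`|f(x) − ((f(b)−f(a))/(b−a))(x − (a+b)/2) − (1/(b−a))∫_a^b f| ≤ (1/(4√3))(b−a)(Φ−φ)`. -/
theorem matic_pecaric_ujevic (I : Set ℝ) (hIopen : IsOpen I) (hIconn : I.OrdConnected)
    (a b : ℝ) (ha : a ∈ I) (hb : b ∈ I) (hab : a < b)
    (f f' : ℝ → ℝ) (hderiv : ∀ x ∈ I, HasDerivAt f (f' x) x)
    (φ Φ : ℝ) (hbound : ∀ x ∈ Icc a b, φ ≤ f' x ∧ f' x ≤ Φ) :
    ∀ x ∈ Icc a b,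
      |f x - ((f b - f a) / (b - a)) * (x - (a + b) / 2) -
          (1 / (b - a)) * ∫ t in a..b, f t| ≤
        (1 / (4 * Real.sqrt 3)) * (b - a) * (Φ - φ) := by
  intro x hx
  have hsub : Icc a b ⊆ I := hIconn.out ha hb
  have hφΦ : φ ≤ Φ := (hbound x hx).1.trans (hbound x hx).2
  refine (matic_pecaric_ujevic_general hab (HasDerivAt.continuousOn fun t ht ↦ hderiv t (hsub ht))
    (fun t ht ↦ hderiv t (hsub (Ioo_subset_Icc_self ht)))
    (fun t ht ↦ hbound t (Ioo_subset_Icc_self ht)) hx).trans ?_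
  gcongr ?_ * _ * _
  exact one_eighth_le_one_div_four_mul_sqrt_three
end

section
/- Let f : I ⊆ ℝ → ℝ be a differentiable mapping on the interior I° of I, a, b ∈ I° with a < b, f′ ∈ L₂[a,b], and suppose f′ is bounded on (a,b) with φ ≤ f′(x) ≤ Φ. Then for all x ∈ [a,b], |f(x) − (1/(b−a)) ∫_a^b f(t) dt − ((f(b)−f(a))/(b−a))(x − (a+b)/2)| ≤ ((b−a)/(2√3)) ( (1/(b−a)) ‖f′‖₂² − ((f(b)−f(a))/(b−a))² )^{1/2} ≤ (b−a)(Φ − φ)/(4√3). -/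
open MeasureTheory Set intervalIntegral

/-!
Let `U` be the uniform law on `(a, b)` and `K` the Peano kernel `t ↦ t - a` for `t ≤ x`,
`t ↦ t - b` for `t > x`. Integrating by parts on both sides of `x` (Montgomery's identity) shows
that the quantity to be estimated is exactly the covariance of `K` and `f'` under `U`. Wrapping
around the circle `ℝ / (b - a)ℤ` makes `K` uniform on `(x - b, x - a)`, so its variance is
`(b - a)² / 12` whatever `x` is, and Cauchy–Schwarz for the covariance gives the first inequality.
The second one is Popoviciu's bound `((Φ - φ) / 2)²` for the variance of `f'`.
-/

section

open ProbabilityTheory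

theorem abs_covariance_le_sqrt_variance_mul_sqrt_variance {Ω : Type*} [MeasurableSpace Ω]
    {μ : Measure Ω} [IsFiniteMeasure μ] {X Y : Ω → ℝ} (hX : MemLp X 2 μ) (hY : MemLp Y 2 μ) :
    |cov[X, Y; μ]| ≤ √Var[X; μ] * √Var[Y; μ] := by
  have hquad (s : ℝ) : 0 ≤ Var[Y; μ] * (s * s) + 2 * cov[X, Y; μ] * s + Var[X; μ] :=
    calc
      0 ≤ Var[X + s • Y; μ] := variance_nonneg _ _
      _ = Var[Y; μ] * (s * s) + 2 * cov[X, Y; μ] * s + Var[X; μ] := by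
        rw [variance_add hX (hY.const_smul s), covariance_smul_right, variance_smul]
        ring
  have hdiscrim := discrim_le_zero hquad
  rw [← Real.sqrt_mul (variance_nonneg X μ)]
  apply Real.abs_le_sqrt
  rw [discrim] at hdiscrim
  linarith

theorem sqrt_variance_le_of_bounded {Ω : Type*} [MeasurableSpace Ω] {μ : Measure Ω}
    [IsProbabilityMeasure μ] {X : Ω → ℝ} {m M : ℝ} (hbound : ∀ᵐ ω ∂μ, X ω ∈ Icc m M)
    (hX : AEMeasurable X μ) : √Var[X; μ] ≤ (M - m) / 2 := by
  obtain ⟨ω, hm, hM⟩ := hbound.exists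
  exact Real.sqrt_le_iff.2 ⟨by linarith, variance_le_sq_of_bounded hbound hX⟩

variable {E : Type*} [NormedAddCommGroup E]

theorem memLp_cond {Ω : Type*} [MeasurableSpace Ω] {μ : Measure Ω} {s : Set Ω} {X : Ω → E}
    {p : ENNReal} (hX : MemLp X p (μ.restrict s)) (hs : μ s ≠ 0) : MemLp X p μ[|s] :=
  hX.smul_measure (ENNReal.inv_ne_top.2 hs)

variable {a b x : ℝ}

theorem intervalIntegrable_of_memLp_restrict_Ioo {g : ℝ → E} {p : ENNReal} (hab : a ≤ b)
    (hp : 1 ≤ p) (hg : MemLp g p (volume.restrict (Ioo a b))) :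
    IntervalIntegrable g volume a b :=
  (intervalIntegrable_iff_integrableOn_Ioo_of_le hab).2 (hg.integrable hp)

variable [NormedSpace ℝ E]

theorem aestronglyMeasurable_restrict_of_hasDerivAt [CompleteSpace E] {f f' : ℝ → E} {s : Set ℝ}
    {μ : Measure ℝ} (hs : MeasurableSet s) (hderiv : ∀ y ∈ s, HasDerivAt f (f' y) y) :
    AEStronglyMeasurable f' (μ.restrict s) :=
  (stronglyMeasurable_deriv f).aestronglyMeasurable.congr <|
    ae_restrict_of_forall_mem hs fun y hy => (hderiv y hy).deriv

theorem isProbabilityMeasure_cond_Ioo (hab : a < b) :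
    IsProbabilityMeasure (volume : Measure ℝ)[|Ioo a b] :=
  cond_isProbabilityMeasure_of_finite (by simp [hab]) (by simp)

theorem integral_cond_Ioo (hab : a ≤ b) (g : ℝ → E) :
    ∫ t, g t ∂volume[|Ioo a b] = (1 / (b - a)) • ∫ t in a..b, g t := by
  rw [ProbabilityTheory.cond, MeasureTheory.integral_smul_measure, ← integral_Ioc_eq_integral_Ioo,
    ← integral_of_le hab, Real.volume_Ioo, ENNReal.toReal_inv,
    ENNReal.toReal_ofReal (sub_nonneg.2 hab), one_div]

theorem variance_cond_Ioo (hab : a < b) {g : ℝ → ℝ} (hg : MemLp g 2 (volume.restrict (Ioo a b))) :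
    Var[g; volume[|Ioo a b]] =
      1 / (b - a) * (∫ t in a..b, g t ^ 2) - (1 / (b - a) * ∫ t in a..b, g t) ^ 2 := by
  have := isProbabilityMeasure_cond_Ioo hab
  rw [variance_eq_sub (memLp_cond hg (by simp [hab])), integral_cond_Ioo hab.le,
    integral_cond_Ioo hab.le]
  simp only [Pi.pow_apply, smul_eq_mul]

/-- The Peano kernel of Montgomery's identity on `[a, b]` with node `x`, against which the
derivative of `f` integrates to `(b - a) * f x - ∫ t in a..b, f t`. At the jump `t = x` it takes its
left limit, a choice that does not affect integrals. -/
noncomputable def peanoKernel (a b x t : ℝ) : ℝ := if t ≤ x then t - a else t - b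

theorem measurable_peanoKernel : Measurable (peanoKernel a b x) :=
  Measurable.ite measurableSet_Iic (by fun_prop) (by fun_prop)

theorem memLp_peanoKernel (p : ENNReal) :
    MemLp (peanoKernel a b x) p (volume.restrict (Ioo a b)) := by
  refine memLp_of_bounded (a := a - b) (b := b - a) (ae_restrict_of_forall_mem measurableSet_Ioo
    fun t ht => ?_) measurable_peanoKernel.aestronglyMeasurable p
  obtain ⟨hat, htb⟩ := ht
  unfold peanoKernel
  split_ifs <;> constructor <;> linarith

theorem integral_peanoKernel_eq_add (hx : x ∈ Icc a b) {F : ℝ → ℝ → E}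
    (hleft : IntervalIntegrable (fun t => F (t - a) t) volume a x)
    (hright : IntervalIntegrable (fun t => F (t - b) t) volume x b) :
    ∫ t in a..b, F (peanoKernel a b x t) t =
      (∫ t in a..x, F (t - a) t) + ∫ t in x..b, F (t - b) t := by
  have heqLeft : EqOn (fun t => F (t - a) t) (fun t => F (peanoKernel a b x t) t) (uIoc a x) := by
    intro t ht
    rw [uIoc_of_le hx.1] at ht
    simp only [peanoKernel, if_pos ht.2]
  have heqRight : EqOn (fun t => F (t - b) t) (fun t => F (peanoKernel a b x t) t) (uIoc x b) := by
    intro t ht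
    rw [uIoc_of_le hx.2] at ht
    simp only [peanoKernel, if_neg ht.1.not_ge]
  rw [← integral_add_adjacent_intervals (hleft.congr heqLeft) (hright.congr heqRight),
    integral_congr_ae (.of_forall heqLeft), integral_congr_ae (.of_forall heqRight)]

theorem integral_comp_peanoKernel (hx : x ∈ Icc a b) {g : ℝ → E} (hg : Continuous g) :
    ∫ t in a..b, g (peanoKernel a b x t) = ∫ u in (x - b)..(x - a), g u :=
  calc
    ∫ t in a..b, g (peanoKernel a b x t) = (∫ t in a..x, g (t - a)) + ∫ t in x..b, g (t - b) :=
      integral_peanoKernel_eq_add hx (F := fun u _ => g u)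
        (Continuous.intervalIntegrable (by fun_prop) _ _)
        (Continuous.intervalIntegrable (by fun_prop) _ _)
    _ = (∫ u in (x - b)..0, g u) + ∫ u in 0..(x - a), g u := by
      rw [integral_comp_sub_right g, integral_comp_sub_right g, sub_self, sub_self, add_comm]
    _ = ∫ u in (x - b)..(x - a), g u :=
      integral_add_adjacent_intervals (hg.intervalIntegrable _ _) (hg.intervalIntegrable _ _)

theorem average_peanoKernel (hab : a < b) (hx : x ∈ Icc a b) :
    1 / (b - a) * ∫ t in a..b, peanoKernel a b x t = x - (a + b) / 2 := by
  have hba : b - a ≠ 0 := (sub_pos.2 hab).ne'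
  rw [integral_comp_peanoKernel hx continuous_id', integral_id]
  field_simp
  ring

theorem variance_peanoKernel (hab : a < b) (hx : x ∈ Icc a b) :
    Var[peanoKernel a b x; volume[|Ioo a b]] = (b - a) ^ 2 / 12 := by
  have hba : b - a ≠ 0 := (sub_pos.2 hab).ne'
  rw [variance_cond_Ioo hab (memLp_peanoKernel 2), average_peanoKernel hab hx,
    integral_comp_peanoKernel hx (continuous_pow 2), integral_pow]
  field_simp
  ring

theorem sqrt_variance_peanoKernel (hab : a < b) (hx : x ∈ Icc a b) :
    √Var[peanoKernel a b x; volume[|Ioo a b]] = (b - a) / (2 * √3) := by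
  have : 0 ≤ b - a := sub_nonneg.2 hab.le
  have hsq : (b - a) ^ 2 / 12 = ((b - a) / (2 * √3)) ^ 2 := by
    rw [div_pow, mul_pow, Real.sq_sqrt (by norm_num)]
    norm_num
  rw [variance_peanoKernel hab hx, hsq, Real.sqrt_sq (by positivity)]

theorem integral_sub_const_smul_deriv [CompleteSpace E] {f f' : ℝ → E} (hab : a ≤ b)
    (hf : ContinuousOn f (Icc a b)) (hderiv : ∀ y ∈ Ioo a b, HasDerivAt f (f' y) y)
    (hf' : IntervalIntegrable f' volume a b) (c : ℝ) :
    ∫ t in a..b, (t - c) • f' t = (b - c) • f b - (a - c) • f a - ∫ t in a..b, f t := by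
  have hparts := integral_smul_deriv_eq_deriv_smul_of_hasDerivAt
    (u := fun t => t - c) (u' := fun _ => 1) (v := f) (v' := f') (a := a) (b := b)
    (by fun_prop) (by rwa [uIcc_of_le hab]) (fun y _ => (hasDerivAt_id y).sub_const c)
    (by rwa [min_eq_left hab, max_eq_right hab]) intervalIntegrable_const hf'
  simpa only [one_smul] using hparts

theorem integral_peanoKernel_smul_deriv [CompleteSpace E] {f f' : ℝ → E} (hx : x ∈ Icc a b)
    (hf : ContinuousOn f (Icc a b)) (hderiv : ∀ y ∈ Ioo a b, HasDerivAt f (f' y) y)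
    (hf' : IntervalIntegrable f' volume a b) :
    ∫ t in a..b, peanoKernel a b x t • f' t = (b - a) • f x - ∫ t in a..b, f t := by
  have hxab : x ∈ uIcc a b := Icc_subset_uIcc hx
  have hf'ax : IntervalIntegrable f' volume a x := hf'.mono_set (uIcc_subset_uIcc_left hxab)
  have hf'xb : IntervalIntegrable f' volume x b := hf'.mono_set (uIcc_subset_uIcc_right hxab)
  have hfax : ContinuousOn f (Icc a x) := hf.mono (Icc_subset_Icc_right hx.2)
  have hfxb : ContinuousOn f (Icc x b) := hf.mono (Icc_subset_Icc_left hx.1)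
  have hleft := integral_sub_const_smul_deriv hx.1 hfax
    (fun y hy => hderiv y (Ioo_subset_Ioo_right hx.2 hy)) hf'ax a
  have hright := integral_sub_const_smul_deriv hx.2 hfxb
    (fun y hy => hderiv y (Ioo_subset_Ioo_left hx.1 hy)) hf'xb b
  calc
    ∫ t in a..b, peanoKernel a b x t • f' t
        = (∫ t in a..x, (t - a) • f' t) + ∫ t in x..b, (t - b) • f' t :=
      integral_peanoKernel_eq_add hx (F := fun u t => u • f' t)
        (hf'ax.continuousOn_smul (by fun_prop)) (hf'xb.continuousOn_smul (by fun_prop))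
    _ = (b - a) • f x - ((∫ t in a..x, f t) + ∫ t in x..b, f t) := by
      rw [hleft, hright]
      module
    _ = (b - a) • f x - ∫ t in a..b, f t := by
      rw [integral_add_adjacent_intervals (hfax.intervalIntegrable_of_Icc hx.1)
        (hfxb.intervalIntegrable_of_Icc hx.2)]

variable {f f' : ℝ → ℝ}

theorem covariance_peanoKernel_deriv (hab : a < b) (hx : x ∈ Icc a b)
    (hf : ContinuousOn f (Icc a b)) (hderiv : ∀ y ∈ Ioo a b, HasDerivAt f (f' y) y)
    (hf' : MemLp f' 2 (volume.restrict (Ioo a b))) :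
    cov[peanoKernel a b x, f'; volume[|Ioo a b]] =
      f x - 1 / (b - a) * (∫ t in a..b, f t) - (f b - f a) / (b - a) * (x - (a + b) / 2) := by
  have := isProbabilityMeasure_cond_Ioo hab
  have hba : b - a ≠ 0 := (sub_pos.2 hab).ne'
  have hvol : volume (Ioo a b) ≠ 0 := by simp [hab]
  have hint : IntervalIntegrable f' volume a b :=
    intervalIntegrable_of_memLp_restrict_Ioo hab.le one_le_two hf'
  rw [covariance_eq_sub (memLp_cond (memLp_peanoKernel 2) hvol) (memLp_cond hf' hvol)]
  simp only [integral_cond_Ioo hab.le, Pi.mul_apply, smul_eq_mul]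
  have hmontgomery := integral_peanoKernel_smul_deriv hx hf hderiv hint
  simp only [smul_eq_mul] at hmontgomery
  rw [average_peanoKernel hab hx, hmontgomery,
    integral_eq_sub_of_hasDerivAt_of_le hab.le hf hderiv hint]
  field_simp

theorem variance_deriv_cond_Ioo (hab : a < b) (hf : ContinuousOn f (Icc a b))
    (hderiv : ∀ y ∈ Ioo a b, HasDerivAt f (f' y) y)
    (hf' : MemLp f' 2 (volume.restrict (Ioo a b))) :
    Var[f'; volume[|Ioo a b]] =
      1 / (b - a) * (∫ t in a..b, f' t ^ 2) - ((f b - f a) / (b - a)) ^ 2 := by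
  rw [variance_cond_Ioo hab hf', integral_eq_sub_of_hasDerivAt_of_le hab.le hf hderiv
    (intervalIntegrable_of_memLp_restrict_Ioo hab.le one_le_two hf'),
    one_div_mul_eq_div _ (f b - f a)]

theorem abs_sub_average_sub_slope_mul_le (hab : a < b) (hx : x ∈ Icc a b)
    (hf : ContinuousOn f (Icc a b)) (hderiv : ∀ y ∈ Ioo a b, HasDerivAt f (f' y) y)
    (hf' : MemLp f' 2 (volume.restrict (Ioo a b))) :
    |f x - 1 / (b - a) * (∫ t in a..b, f t) - (f b - f a) / (b - a) * (x - (a + b) / 2)| ≤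
      (b - a) / (2 * √3) * √Var[f'; volume[|Ioo a b]] := by
  have := isProbabilityMeasure_cond_Ioo hab
  have hvol : volume (Ioo a b) ≠ 0 := by simp [hab]
  rw [← covariance_peanoKernel_deriv hab hx hf hderiv hf', ← sqrt_variance_peanoKernel hab hx]
  exact abs_covariance_le_sqrt_variance_mul_sqrt_variance
    (memLp_cond (memLp_peanoKernel 2) hvol) (memLp_cond hf' hvol)

theorem main_corollary_alpha_one_general {φ Φ : ℝ} (hab : a < b) (hf : ContinuousOn f (Icc a b))
    (hderiv : ∀ y ∈ Ioo a b, HasDerivAt f (f' y) y)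
    (hbound : ∀ x ∈ Ioo a b, φ ≤ f' x ∧ f' x ≤ Φ) :
    ∀ x ∈ Icc a b,
      |f x - (1 / (b - a)) * (∫ t in a..b, f t) -
          ((f b - f a) / (b - a)) * (x - (a + b) / 2)| ≤
        ((b - a) / (2 * √3)) *
          √((1 / (b - a)) * (∫ t in a..b, (f' t) ^ 2) - ((f b - f a) / (b - a)) ^ 2) ∧
      ((b - a) / (2 * √3)) *
          √((1 / (b - a)) * (∫ t in a..b, (f' t) ^ 2) - ((f b - f a) / (b - a)) ^ 2) ≤
        (b - a) * (Φ - φ) / (4 * √3) := by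
  intro x hx
  have hL2 : MemLp f' 2 (volume.restrict (Ioo a b)) :=
    memLp_of_bounded (ae_restrict_of_forall_mem measurableSet_Ioo hbound)
      (aestronglyMeasurable_restrict_of_hasDerivAt measurableSet_Ioo hderiv) 2
  have hstd : √Var[f'; volume[|Ioo a b]] ≤ (Φ - φ) / 2 := by
    have := isProbabilityMeasure_cond_Ioo hab
    exact sqrt_variance_le_of_bounded (ae_cond_of_forall_mem measurableSet_Ioo hbound)
      (memLp_cond hL2 (by simp [hab])).aestronglyMeasurable.aemeasurable
  rw [← variance_deriv_cond_Ioo hab hf hderiv hL2]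
  refine ⟨abs_sub_average_sub_slope_mul_le hab hx hf hderiv hL2, ?_⟩
  have : 0 ≤ b - a := sub_nonneg.2 hab.le
  calc
    (b - a) / (2 * √3) * √Var[f'; volume[|Ioo a b]]
        ≤ (b - a) / (2 * √3) * ((Φ - φ) / 2) := by gcongr
    _ = (b - a) * (Φ - φ) / (4 * √3) := by ring

end

/-- **Corollary (α = 1) of the main theorem.** For `f` differentiable on the interior of
`I`, `a, b ∈ I°`, `a < b`, `f' ∈ L₂[a,b]`, `f'` bounded on `(a,b)` by `φ ≤ f' ≤ Φ`:
for all `x ∈ [a,b]`,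
`|f(x) − (1/(b−a))∫_a^b f − ((f(b)−f(a))/(b−a))(x−(a+b)/2)|
  ≤ ((b−a)/(2√3)) ((1/(b−a))‖f'‖₂² − ((f(b)−f(a))/(b−a))²)^{1/2}
  ≤ (b−a)(Φ−φ)/(4√3)`. -/
theorem main_corollary_alpha_one (I : Set ℝ) (hIconn : I.OrdConnected)
    (a b φ Φ : ℝ) (ha : a ∈ interior I) (hb : b ∈ interior I) (hab : a < b)
    (f f' : ℝ → ℝ) (hderiv : ∀ y ∈ interior I, HasDerivAt f (f' y) y)
    (hL2 : IntervalIntegrable (fun t => (f' t) ^ 2) volume a b)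
    (hbound : ∀ x ∈ Ioo a b, φ ≤ f' x ∧ f' x ≤ Φ) :
    ∀ x ∈ Icc a b,
      |f x - (1 / (b - a)) * (∫ t in a..b, f t) -
          ((f b - f a) / (b - a)) * (x - (a + b) / 2)| ≤
        ((b - a) / (2 * Real.sqrt 3)) *
          Real.sqrt ((1 / (b - a)) * (∫ t in a..b, (f' t) ^ 2) -
            ((f b - f a) / (b - a)) ^ 2) ∧
      ((b - a) / (2 * Real.sqrt 3)) *
          Real.sqrt ((1 / (b - a)) * (∫ t in a..b, (f' t) ^ 2) -
            ((f b - f a) / (b - a)) ^ 2) ≤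
        (b - a) * (Φ - φ) / (4 * Real.sqrt 3) := by
  have hsub : Icc a b ⊆ interior I := hIconn.interior.out ha hb
  exact main_corollary_alpha_one_general hab
    (fun y hy => (hderiv y (hsub hy)).continuousAt.continuousWithinAt)
    (fun y hy => hderiv y (hsub (Ioo_subset_Icc_self hy))) hbound
end
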